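/- Let (X,f) be a TDS and φ: X → ℝ continuous. For any ergodic μ ∈ E(X,f), the limits defining SP_μ(f,φ) and SP'_μ(f,φ) exist and SP_μ(f,φ) = SP'_μ(f,φ) = h_μ(f) + ∫_X φ dμ. -/

import Mathlib

open MeasureTheory Filter Set
open scoped ENNReal NNReal

namespace Paper

variable {X : Type*}

/-- Birkhoff sum `S_n φ(x) = ∑_{i<n} φ(f^i x)`. -/
def birk (f : X → X) (φ : X → ℝ) (n : ℕ) (x : X) : ℝ :=
  ∑ i ∈ Finset.range n, φ (f^[i] x)

section Metric

variable [MetricSpace X]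

/-- The Bowen ball `B_n(x, ε) = {y : d_n(x,y) < ε}`. -/
def bowenBall (f : X → X) (x : X) (n : ℕ) (ε : ℝ) : Set X :=
  {y | ∀ i < n, dist (f^[i] x) (f^[i] y) < ε}

/-- The number of indices `0 ≤ j ≤ n-1` with `dist (f^j x, f^j y) > ε`. -/
noncomputable def sepCount (f : X → X) (ε : ℝ) (n : ℕ) (x y : X) : ℕ :=
  Nat.card {j : ℕ // j < n ∧ ε < dist (f^[j] x) (f^[j] y)}

/-- `A` is an `(n,ε)`-separated set. -/
def IsNSep (f : X → X) (n : ℕ) (ε : ℝ) (A : Set X) : Prop :=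
  ∀ x ∈ A, ∀ y ∈ A, x ≠ y → ∃ j < n, ε < dist (f^[j] x) (f^[j] y)

/-- `A` is a `(δ,n,ε)`-separated set. -/
def IsDeltaSep (f : X → X) (δ : ℝ) (n : ℕ) (ε : ℝ) (A : Set X) : Prop :=
  ∀ x ∈ A, ∀ y ∈ A, x ≠ y → δ * n ≤ (sepCount f ε n x y : ℝ)

end Metric

section Entropy

variable [MeasurableSpace X]

/-- A finite measurable partition of `X`. -/
def IsFinPartition (s : Finset (Set X)) : Prop :=
  (∀ A ∈ s, MeasurableSet A) ∧ ⋃₀ (s : Set (Set X)) = Set.univ ∧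
    (s : Set (Set X)).Pairwise Disjoint

/-- The entropy `H(μ, ⋁_{i<n} f^{-i} ξ)` of the `n`-th dynamical refinement of the
partition `s` (with the convention `0 · log 0 = 0`). -/
noncomputable def dynH (f : X → X) (μ : Measure X) (s : Finset (Set X)) (n : ℕ) : ℝ :=
  -∑ w : Fin n → {A // A ∈ s},
      (μ (⋂ i : Fin n, f^[(i : ℕ)] ⁻¹' ((w i : Set X)))).toReal *
        Real.log (μ (⋂ i : Fin n, f^[(i : ℕ)] ⁻¹' ((w i : Set X)))).toReal

/-- The Kolmogorov–Sinai entropy `h_μ(f)`, as an extended real: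
`sup_ξ lim_n H(μ, ξ^n)/n`. -/
noncomputable def ksEntropy (f : X → X) (μ : Measure X) : EReal :=
  ⨆ (s : Finset (Set X)) (_ : IsFinPartition s),
    Filter.atTop.liminf (fun n : ℕ => ((dynH f μ s n / n : ℝ) : EReal))

end Entropy

section Empiric

variable [MeasurableSpace X]

/-- The empiric measure `E_n(x) = (1/n) ∑_{k<n} δ_{f^k x}`. -/
noncomputable def empiric (f : X → X) (x : X) (n : ℕ) : Measure X :=
  (n : ℝ≥0∞)⁻¹ • ∑ k ∈ Finset.range n, Measure.dirac (f^[k] x)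

end Empiric

section WeakStar

variable [MeasurableSpace X] [TopologicalSpace X] [OpensMeasurableSpace X]

/-- The set `X_{n,F}` of points whose `n`-th empiric measure lies in `F ⊆ M(X)`
(where `M(X)`, the space of Borel probability measures, carries the weak-star topology). -/
def Xnf (f : X → X) (n : ℕ) (F : Set (ProbabilityMeasure X)) : Set X :=
  {x | ∃ h : IsProbabilityMeasure (empiric f x n),
        (⟨empiric f x n, h⟩ : ProbabilityMeasure X) ∈ F}

end WeakStar

section SepPressure

variable [MetricSpace X] [MeasurableSpace X] [OpensMeasurableSpace X]

/-- `P(F;φ,n,ε)`: the supremum of `∑_{x∈E} e^{S_nφ(x)}` over `(n,ε)`-separated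
subsets `E ⊆ X_{n,F}`. -/
noncomputable def Psep (f : X → X) (φ : X → ℝ) (F : Set (ProbabilityMeasure X))
    (n : ℕ) (ε : ℝ) : ℝ≥0∞ :=
  ⨆ (E : Finset X) (_ : ↑E ⊆ Xnf f n F ∧ IsNSep f n ε ↑E),
    ∑ x ∈ E, ENNReal.ofReal (Real.exp (birk f φ n x))

/-- `P(F;φ,δ,n,ε)`: the analogue of `P(F;φ,n,ε)` with `(δ,n,ε)`-separated sets. -/
noncomputable def PsepDelta (f : X → X) (φ : X → ℝ) (F : Set (ProbabilityMeasure X))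
    (δ : ℝ) (n : ℕ) (ε : ℝ) : ℝ≥0∞ :=
  ⨆ (E : Finset X) (_ : ↑E ⊆ Xnf f n F ∧ IsDeltaSep f δ n ε ↑E),
    ∑ x ∈ E, ENNReal.ofReal (Real.exp (birk f φ n x))

/-- `SP̄_ν(f,φ) = lim_{ε→0} inf_{F∋ν} limsup_n (1/n) log P(F;φ,n,ε)`
(the limit in `ε` being a supremum by monotonicity). -/
noncomputable def SPbar (f : X → X) (φ : X → ℝ) (ν : ProbabilityMeasure X) : EReal :=
  ⨆ (ε : ℝ) (_ : 0 < ε), ⨅ (F : Set (ProbabilityMeasure X)) (_ : F ∈ nhds ν),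
    Filter.atTop.limsup (fun n : ℕ => (((n : ℝ)⁻¹ : ℝ) : EReal) * (Psep f φ F n ε).log)

/-- `S̲P_ν(f,φ) = lim_{ε→0} inf_{F∋ν} liminf_n (1/n) log P(F;φ,n,ε)`. -/
noncomputable def SPlow (f : X → X) (φ : X → ℝ) (ν : ProbabilityMeasure X) : EReal :=
  ⨆ (ε : ℝ) (_ : 0 < ε), ⨅ (F : Set (ProbabilityMeasure X)) (_ : F ∈ nhds ν),
    Filter.atTop.liminf (fun n : ℕ => (((n : ℝ)⁻¹ : ℝ) : EReal) * (Psep f φ F n ε).log)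

/-- `SP̄'_ν(f,φ)`: as `SP̄_ν(f,φ)` but via `(δ,n,ε)`-separated sets, with the limit
`δ → 0` taken before `ε → 0` (both limits being suprema by monotonicity). -/
noncomputable def SPbar' (f : X → X) (φ : X → ℝ) (ν : ProbabilityMeasure X) : EReal :=
  ⨆ (ε : ℝ) (_ : 0 < ε), ⨆ (δ : ℝ) (_ : 0 < δ),
    ⨅ (F : Set (ProbabilityMeasure X)) (_ : F ∈ nhds ν),
      Filter.atTop.limsup (fun n : ℕ =>
        (((n : ℝ)⁻¹ : ℝ) : EReal) * (PsepDelta f φ F δ n ε).log)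

/-- `S̲P'_ν(f,φ)`. -/
noncomputable def SPlow' (f : X → X) (φ : X → ℝ) (ν : ProbabilityMeasure X) : EReal :=
  ⨆ (ε : ℝ) (_ : 0 < ε), ⨆ (δ : ℝ) (_ : 0 < δ),
    ⨅ (F : Set (ProbabilityMeasure X)) (_ : F ∈ nhds ν),
      Filter.atTop.liminf (fun n : ℕ =>
        (((n : ℝ)⁻¹ : ℝ) : EReal) * (PsepDelta f φ F δ n ε).log)

end SepPressure

end Paper

open Paper

open MeasureTheory Filter Set
open scoped ENNReal NNReal
open Paper

set_option linter.unusedSectionVars false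

namespace SPaux

section Emp
variable {X : Type*} [MetricSpace X] [MeasurableSpace X] [BorelSpace X]

lemma empiric_prob (f : X → X) (x : X) {n : ℕ} (hn : 0 < n) :
    IsProbabilityMeasure (empiric f x n) := by
  constructor
  simp only [empiric, Measure.smul_apply, Measure.finsetSum_apply, measure_univ, Finset.sum_const,
    Finset.card_range, smul_eq_mul, nsmul_eq_mul, mul_one]
  exact ENNReal.inv_mul_cancel (by exact_mod_cast hn.ne') (ENNReal.natCast_ne_top n)

lemma integral_empiric (f : X → X) (x : X) (n : ℕ) (g : X → ℝ) :
    ∫ y, g y ∂(empiric f x n) = (n : ℝ)⁻¹ * birk f g n x := by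
  rw [empiric, integral_smul_measure, integral_finsetSum_measure]
  · simp [birk, integral_dirac]
  · intro i _
    exact integrable_dirac (by simp)

/-- The empiric measure as an element of `ProbabilityMeasure X`. -/
noncomputable def emp (f : X → X) (x : X) {n : ℕ} (hn : 0 < n) : ProbabilityMeasure X :=
  ⟨empiric f x n, empiric_prob f x hn⟩

lemma coe_emp (f : X → X) (x : X) {n : ℕ} (hn : 0 < n) :
    (emp f x hn : Measure X) = empiric f x n := rfl

lemma mem_Xnf (f : X → X) (x : X) {n : ℕ} (hn : 0 < n) (F : Set (ProbabilityMeasure X)) :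
    x ∈ Xnf f n F ↔ emp f x hn ∈ F :=
  ⟨fun ⟨_, h⟩ => h, fun h => ⟨_, h⟩⟩

/-- Mean ergodic theorem, in measure. -/
lemma ergodic_in_measure (f : X → X) (μ : Measure X) [IsProbabilityMeasure μ] (herg : Ergodic f μ)
    (g : X → ℝ) (hg : MemLp g 2 μ) :
    TendstoInMeasure μ (fun (n : ℕ) x => (n : ℝ)⁻¹ * birk f g n x) atTop (fun _ => ∫ x, g x ∂μ) := by
  have hmp := herg.toMeasurePreserving
  let U : Lp ℝ 2 μ →L[ℝ] Lp ℝ 2 μ := (Lp.compMeasurePreservingₗᵢ ℝ f hmp).toContinuousLinearMap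
  have hU : ‖U‖ ≤ 1 := LinearIsometry.norm_toContinuousLinearMap_le _
  have hUa : ∀ u : Lp ℝ 2 μ, U u = Lp.compMeasurePreserving f hmp u := fun u => rfl
  let G : Lp ℝ 2 μ := hg.toLp g
  have key := U.tendsto_birkhoffAverage_orthogonalProjection hU G
  let P : Lp ℝ 2 μ := ((U.eqLocus (1 : Lp ℝ 2 μ →L[ℝ] Lp ℝ 2 μ)).orthogonalProjectionOnto G : Lp ℝ 2 μ)
  have hP : U P = P := by
    have := ((U.eqLocus (1 : Lp ℝ 2 μ →L[ℝ] Lp ℝ 2 μ)).orthogonalProjectionOnto G).2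
    exact this
  have hPc : ∃ c, P =ᵐ[μ] Function.const X c := by
    apply herg.ae_eq_const_of_ae_eq_comp_ae (Lp.aestronglyMeasurable P)
    have h1 := Lp.coeFn_compMeasurePreserving P hmp
    rw [← hUa, hP] at h1
    exact h1.symm
  obtain ⟨c, hc⟩ := hPc
  -- identify the constant
  have hone : MemLp (fun _ : X => (1 : ℝ)) 2 μ := memLp_const 1
  let O : Lp ℝ 2 μ := hone.toLp _
  have hO : U O = O := by
    rw [hUa]
    exact Lp.toLp_compMeasurePreserving hone hmp
  have hinner : inner ℝ O P = inner ℝ O G := by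
    have hmem : O ∈ U.eqLocus (1 : Lp ℝ 2 μ →L[ℝ] Lp ℝ 2 μ) := hO
    have := Submodule.inner_orthogonalProjectionOnto_eq_of_mem_left (K := U.eqLocus (1 : Lp ℝ 2 μ →L[ℝ] Lp ℝ 2 μ)) ⟨O, hmem⟩ G
    rw [← this]; rfl
  have hI : c = ∫ x, g x ∂μ := by
    rw [L2.inner_def, L2.inner_def] at hinner
    have e1 : ∫ a, inner ℝ (O a) (P a) ∂μ = c := by
      have : (fun a => inner ℝ (O a) (P a)) =ᵐ[μ] fun _ => c := by
        filter_upwards [hc, hone.coeFn_toLp] with a h1 h2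
        simp only [O, h2, h1]; simp
      rw [integral_congr_ae this]; simp
    have e2 : ∫ a, inner ℝ (O a) (G a) ∂μ = ∫ x, g x ∂μ := by
      apply integral_congr_ae
      filter_upwards [hg.coeFn_toLp, hone.coeFn_toLp] with a h1 h2
      simp only [O, G, h2, h1]; simp
    rw [← e1, ← e2, hinner]
  have hm := tendstoInMeasure_of_tendsto_Lp key
  have hit : ∀ k : ℕ, ((U^[k] G : Lp ℝ 2 μ) : X → ℝ) =ᵐ[μ] fun x => g (f^[k] x) := by
    intro k
    induction k with
    | zero => simpa using hg.coeFn_toLp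
    | succ k ih =>
      rw [Function.iterate_succ_apply']
      have h1 := Lp.coeFn_compMeasurePreserving (U^[k] G) hmp
      rw [hUa]
      refine h1.trans ?_
      have h2 := hmp.quasiMeasurePreserving.ae_eq_comp ih
      refine h2.trans (Eventually.of_forall fun x => ?_)
      simp [Function.iterate_succ_apply]
  refine hm.congr ?_ ?_
  · intro n
    have hs : ((∑ k ∈ Finset.range n, U^[k] G : Lp ℝ 2 μ) : X → ℝ) =ᵐ[μ] fun x => birk f g n x := by
      induction n with
      | zero =>
        simp only [Finset.range_zero, Finset.sum_empty, birk]
        exact Lp.coeFn_zero _ _ _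
      | succ n ih =>
        rw [Finset.sum_range_succ]
        filter_upwards [Lp.coeFn_add (∑ k ∈ Finset.range n, U^[k] G) (U^[n] G), ih, hit n] with x h1 h2 h3
        rw [h1, Pi.add_apply, h2, h3, birk, birk, Finset.sum_range_succ]
    have e : birkhoffAverage ℝ U _root_.id n G = (n : ℝ)⁻¹ • (∑ k ∈ Finset.range n, U^[k] G) := by
      simp [birkhoffAverage, birkhoffSum]
    rw [e]
    filter_upwards [Lp.coeFn_smul ((n : ℝ)⁻¹) (∑ k ∈ Finset.range n, U^[k] G), hs] with x h1 h2
    rw [h1, Pi.smul_apply, h2, smul_eq_mul]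
  · rw [← hI]
    exact hc

/-- Empirical measures converge to `μ` in measure. -/
lemma tendsto_Xnf [CompactSpace X] (f : X → X) (ν : ProbabilityMeasure X)
    (herg : Ergodic f (ν : Measure X)) (F : Set (ProbabilityMeasure X))
    (hF : F ∈ nhds ν) :
    Tendsto (fun n => (ν : Measure X) (Xnf f n F)ᶜ) atTop (nhds 0) := by
  let L : Filter (ProbabilityMeasure X) :=
    { sets := {F | Tendsto (fun n => (ν : Measure X) (Xnf f n F)ᶜ) atTop (nhds 0)}
      univ_sets := by
        refine tendsto_const_nhds.congr' ?_
        filter_upwards [eventually_gt_atTop 0] with n hn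
        have : Xnf f n (univ : Set (ProbabilityMeasure X)) = univ := by
          ext x; simp [mem_Xnf f x hn]
        simp [this]
      sets_of_superset := by
        intro A B hA hAB
        refine tendsto_of_tendsto_of_tendsto_of_le_of_le tendsto_const_nhds hA
          (fun _ => zero_le) fun n => measure_mono ?_
        intro x hx hx'
        obtain ⟨h, h'⟩ := hx'
        exact hx ⟨h, hAB h'⟩
      inter_sets := by
        intro A B hA hB
        have hAB := Tendsto.add hA hB
        rw [add_zero] at hAB
        refine tendsto_of_tendsto_of_tendsto_of_le_of_le tendsto_const_nhds hAB
          (fun _ => zero_le) fun n => (measure_mono ?_).trans (measure_union_le _ _)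
        intro x hx
        by_contra hc
        simp only [mem_union, mem_compl_iff, not_or, not_not] at hc
        obtain ⟨⟨h, h1⟩, ⟨_, h2⟩⟩ := hc
        exact hx ⟨h, h1, h2⟩ }
  suffices h : Tendsto id L (nhds ν) by
    exact h hF
  rw [ProbabilityMeasure.tendsto_iff_forall_integral_tendsto]
  intro g
  rw [Metric.tendsto_nhds]
  intro ε hε
  have hg : MemLp g 2 (ν : Measure X) := by
    refine MemLp.of_bound g.continuous.aestronglyMeasurable ‖g‖ (Eventually.of_forall g.norm_coe_le_norm)
  have h1 := ergodic_in_measure f ν herg g hg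
  rw [tendstoInMeasure_iff_dist] at h1
  have h2 := h1 ε hε
  change Tendsto _ _ _
  refine tendsto_of_tendsto_of_tendsto_of_le_of_le' tendsto_const_nhds h2
    (Eventually.of_forall fun _ => zero_le) ?_
  filter_upwards [eventually_gt_atTop 0] with n hn
  refine measure_mono fun x hx => ?_
  rw [mem_compl_iff, mem_Xnf f x hn] at hx
  simp only [mem_ofPred_eq, id, not_lt] at hx
  have h3 := integral_empiric f x n g
  simp only [coe_emp] at hx
  rw [h3] at hx
  exact hx

end Emp
end SPaux

open MeasureTheory Filter Set
open scoped ENNReal NNReal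
open Paper

set_option linter.unusedSectionVars false

namespace SPaux

section Comb

/-- Gibbs inequality. -/
lemma gibbs {W : Type*} [Fintype W] (p q : W → ℝ) (hp : ∀ w, 0 ≤ p w) (hq : ∀ w, 0 < q w)
    (hs : ∑ w, q w ≤ ∑ w, p w) :
    -∑ w, p w * Real.log (p w) ≤ -∑ w, p w * Real.log (q w) := by
  have h : ∀ w, p w * Real.log (q w) - p w * Real.log (p w) ≤ q w - p w := by
    intro w
    rcases (hp w).eq_or_lt with h0 | h0
    · rw [← h0]; simpa using (hq w).le
    · have h1 := Real.log_le_sub_one_of_pos (div_pos (hq w) h0)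
      rw [Real.log_div (hq w).ne' h0.ne'] at h1
      have h2 := mul_le_mul_of_nonneg_left h1 h0.le
      have h3 : p w * (q w / p w - 1) = q w - p w := by field_simp
      linarith
  have h' := Finset.sum_le_sum fun w (_ : w ∈ Finset.univ) => h w
  rw [Finset.sum_sub_distrib, Finset.sum_sub_distrib] at h'
  linarith

lemma block_sum {Y S : Type*} [Fintype S] (E : Finset Y) (u : Y → ℕ → S) (n q : ℕ)
    (hq : 0 < q) (hinj : ∀ x ∈ E, ∀ y ∈ E, (∀ i < n, u x i = u y i) → x = y)
    (p : (Fin q → S) → ℝ) (hp : ∀ w, 0 ≤ p w) (hs : ∑ w, p w ≤ 1) (j : ℕ) (hj : j < q) :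
    ∑ x ∈ E, ∏ l ∈ Finset.range (n / q), p (fun r : Fin q => u x (j + l * q + r)) ≤
      ((Fintype.card S : ℝ) ^ q) ^ 2 := by
  classical
  set b := n / q with hb
  let T : Y → (Fin q → S) × (Fin b → Fin q → S) × (Fin q → S) := fun x =>
    (fun r => u x r, fun l r => u x (j + l * q + r), fun r => u x (b * q + r))
  let Wt : (Fin q → S) × (Fin b → Fin q → S) × (Fin q → S) → ℝ := fun t => ∏ l, p (t.2.1 l)
  have hT : Set.InjOn T E := by
    intro x hx y hy hxy
    apply hinj x hx y hy
    intro i hi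
    simp only [T, Prod.mk.injEq] at hxy
    obtain ⟨h1, h2, h3⟩ := hxy
    by_cases c1 : i < q
    · exact congrFun h1 ⟨i, c1⟩
    by_cases c2 : i < j + b * q
    · have hl : (i - j) / q < b := by
        rw [Nat.div_lt_iff_lt_mul hq]; omega
      have hr : (i - j) % q < q := Nat.mod_lt _ hq
      have h4 := congrFun (congrFun h2 ⟨(i - j) / q, hl⟩) ⟨(i - j) % q, hr⟩
      have h5 : j + (i - j) / q * q + (i - j) % q = i := by
        have := Nat.div_add_mod' (i - j) q
        omega
      simpa only [h5] using h4
    · have h6 : n < b * q + q := by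
        have h7 := Nat.div_add_mod' n q
        have h8 := Nat.mod_lt n hq
        rw [← hb] at h7
        omega
      have h4 := congrFun h3 ⟨i - b * q, by omega⟩
      have h5 : b * q + (i - b * q) = i := by omega
      simpa only [h5] using h4
  have hW : ∀ t, 0 ≤ Wt t := fun t => Finset.prod_nonneg fun l _ => hp _
  have e1 : ∑ x ∈ E, ∏ l ∈ Finset.range b, p (fun r : Fin q => u x (j + l * q + r)) =
      ∑ x ∈ E, Wt (T x) := by
    apply Finset.sum_congr rfl
    intro x _
    simp only [Wt, T]
    exact (Fin.prod_univ_eq_prod_range (fun l => p (fun r : Fin q => u x (j + l * q + r))) b).symm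
  rw [e1, ← Finset.sum_image (f := Wt) hT]
  calc ∑ t ∈ E.image T, Wt t ≤ ∑ t, Wt t :=
        Finset.sum_le_univ_sum_of_nonneg hW
    _ = (Fintype.card S : ℝ) ^ q * ((∑ w, p w) ^ b * (Fintype.card S : ℝ) ^ q) := by
        simp only [Fintype.sum_prod_type, Wt]
        have h7 : ∑ v : Fin b → Fin q → S, ∏ l, p (v l) = (∑ w, p w) ^ b := by
          have h8 := Finset.prod_univ_sum (fun _ : Fin b => (Finset.univ : Finset (Fin q → S)))
            (fun _ w => p w)
          simpa using h8.symm
        simp [← Finset.mul_sum, h7, mul_comm]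
    _ ≤ (Fintype.card S : ℝ) ^ q * (1 * (Fintype.card S : ℝ) ^ q) := by
        gcongr
        exact pow_le_one₀ (Finset.sum_nonneg fun w _ => hp w) hs
    _ = _ := by ring

lemma sum_blocks (G : ℕ → ℝ) (b q : ℕ) :
    ∑ j ∈ Finset.range q, ∑ l ∈ Finset.range b, G (j + l * q) = ∑ i ∈ Finset.range (b * q), G i := by
  rw [Finset.sum_comm]
  induction b with
  | zero => simp
  | succ b ih =>
    rw [Finset.sum_range_succ, ih, Nat.succ_mul, Finset.sum_range_add]
    simp [add_comm]

/-- Counting bound for names with controlled block statistics. -/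
lemma count_bound {Y S : Type*} [Fintype S] (E : Finset Y) (u : Y → ℕ → S) (n q : ℕ)
    (hq : 0 < q) (hinj : ∀ x ∈ E, ∀ y ∈ E, (∀ i < n, u x i = u y i) → x = y)
    (p : (Fin q → S) → ℝ) (hp : ∀ w, 0 < p w) (hs : ∑ w, p w ≤ 1) (a : ℝ)
    (hE : ∀ x ∈ E, -(n * q * a : ℝ) ≤
      ∑ i ∈ Finset.range n, Real.log (p fun r : Fin q => u x (i + r))) :
    (E.card : ℝ) ≤ (q * ((Fintype.card S : ℝ) ^ q) ^ 2) * Real.exp (n * a) := by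
  have hp1 : ∀ w, p w ≤ 1 := fun w =>
    (Finset.single_le_sum (fun w _ => (hp w).le) (Finset.mem_univ w)).trans hs
  have hx : ∀ x ∈ E, Real.exp (-(n * a)) ≤ ∑ j ∈ Finset.range q,
      ∏ l ∈ Finset.range (n / q), p (fun r : Fin q => u x (j + l * q + r)) := by
    intro x hx
    set G : ℕ → ℝ := fun i => Real.log (p fun r : Fin q => u x (i + r)) with hG
    have hG0 : ∀ i, G i ≤ 0 := fun i => Real.log_nonpos (hp _).le (hp1 _)
    have h1 : ∑ i ∈ Finset.range n, G i ≤ ∑ i ∈ Finset.range (n / q * q), G i := by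
      have hsub : Finset.range (n / q * q) ⊆ Finset.range n :=
        Finset.range_subset_range.2 (Nat.div_mul_le_self n q)
      rw [← Finset.sum_sdiff hsub]
      have := Finset.sum_nonpos fun i (_ : i ∈ Finset.range n \ Finset.range (n / q * q)) => hG0 i
      linarith
    rw [← sum_blocks] at h1
    have h2 : ∃ j ∈ Finset.range q, -(n * a : ℝ) ≤ ∑ l ∈ Finset.range (n / q), G (j + l * q) := by
      apply Finset.exists_le_of_sum_le ⟨0, by simpa using hq⟩
      have := hE x hx
      simp only [Finset.sum_const, Finset.card_range, nsmul_eq_mul]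
      linarith
    obtain ⟨j, hj, h3⟩ := h2
    have h4 : ∏ l ∈ Finset.range (n / q), p (fun r : Fin q => u x (j + l * q + r)) =
        Real.exp (∑ l ∈ Finset.range (n / q), G (j + l * q)) := by
      rw [Real.exp_sum]
      exact Finset.prod_congr rfl fun l _ => (Real.exp_log (hp _)).symm
    calc Real.exp (-(n * a)) ≤ _ := Real.exp_le_exp.2 h3
      _ = _ := h4.symm
      _ ≤ _ := Finset.single_le_sum
        (f := fun j => ∏ l ∈ Finset.range (n / q), p (fun r : Fin q => u x (j + l * q + r)))
        (fun j _ => Finset.prod_nonneg fun l _ => (hp _).le) hj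
  have h5 : (E.card : ℝ) * Real.exp (-(n * a)) ≤ q * ((Fintype.card S : ℝ) ^ q) ^ 2 := by
    calc (E.card : ℝ) * Real.exp (-(n * a)) = ∑ x ∈ E, Real.exp (-(n * a)) := by simp
      _ ≤ _ := Finset.sum_le_sum hx
      _ = _ := Finset.sum_comm
      _ ≤ ∑ j ∈ Finset.range q, ((Fintype.card S : ℝ) ^ q) ^ 2 :=
        Finset.sum_le_sum fun j hj => block_sum E u n q hq hinj p (fun w => (hp w).le) hs j
          (Finset.mem_range.1 hj)
      _ = _ := by simp
  calc (E.card : ℝ) = (E.card : ℝ) * Real.exp (-(n * a)) * Real.exp (n * a) := by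
        rw [mul_assoc, ← Real.exp_add]; simp
    _ ≤ _ := mul_le_mul_of_nonneg_right h5 (Real.exp_pos _).le

end Comb

section Part
variable {X : Type*} [MetricSpace X] [MeasurableSpace X] [BorelSpace X]

lemma exists_idx (s : Finset (Set X)) (hs : IsFinPartition s) :
    ∃ idx : X → {A // A ∈ s}, ∀ x (A : {A // A ∈ s}), x ∈ (A : Set X) ↔ idx x = A := by
  obtain ⟨-, h2, h3⟩ := hs
  have : ∀ x : X, ∃ A : {A // A ∈ s}, x ∈ (A : Set X) := by
    intro x
    have : x ∈ ⋃₀ (s : Set (Set X)) := by rw [h2]; trivial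
    obtain ⟨A, hA, hx⟩ := this
    exact ⟨⟨A, hA⟩, hx⟩
  choose idx hidx using this
  refine ⟨idx, fun x A => ⟨fun h => ?_, fun h => h ▸ hidx x⟩⟩
  by_contra hne
  have := h3 (idx x).2 A.2 (fun h => hne (Subtype.ext h))
  exact Set.disjoint_left.1 this (hidx x) h

/-- The cell of a word. -/
def cell (f : X → X) (s : Finset (Set X)) (n : ℕ) (w : Fin n → {A // A ∈ s}) : Set X :=
  ⋂ i : Fin n, f^[(i : ℕ)] ⁻¹' ((w i : Set X))

lemma mem_cell (f : X → X) (s : Finset (Set X)) (idx : X → {A // A ∈ s})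
    (hidx : ∀ x (A : {A // A ∈ s}), x ∈ (A : Set X) ↔ idx x = A) (n : ℕ)
    (w : Fin n → {A // A ∈ s}) (x : X) :
    x ∈ cell f s n w ↔ (fun i : Fin n => idx (f^[(i : ℕ)] x)) = w := by
  simp only [cell, mem_iInter, mem_preimage, hidx, funext_iff]

lemma measurable_cell (f : X → X) (hf : Measurable f) (s : Finset (Set X)) (hs : IsFinPartition s)
    (n : ℕ) (w : Fin n → {A // A ∈ s}) : MeasurableSet (cell f s n w) :=
  MeasurableSet.iInter fun i => (hf.iterate _) (hs.1 _ (w i).2)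

lemma dynH_eq (f : X → X) (μ : Measure X) (s : Finset (Set X)) (n : ℕ) :
    dynH f μ s n = -∑ w, μ.real (cell f s n w) * Real.log (μ.real (cell f s n w)) := rfl

lemma integral_word (f : X → X) (hf : Measurable f) (μ : Measure X) [IsFiniteMeasure μ]
    (s : Finset (Set X)) (hs : IsFinPartition s) (idx : X → {A // A ∈ s})
    (hidx : ∀ x (A : {A // A ∈ s}), x ∈ (A : Set X) ↔ idx x = A) (n : ℕ)
    (G : (Fin n → {A // A ∈ s}) → ℝ) :
    ∫ x, G (fun i : Fin n => idx (f^[(i : ℕ)] x)) ∂μ = ∑ w, μ.real (cell f s n w) * G w := by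
  classical
  have h1 : ∀ x, G (fun i : Fin n => idx (f^[(i : ℕ)] x)) =
      ∑ w, (cell f s n w).indicator (fun _ => G w) x := by
    intro x
    rw [Finset.sum_eq_single (fun i : Fin n => idx (f^[(i : ℕ)] x))]
    · rw [indicator_of_mem]
      rw [mem_cell f s idx hidx]
    · intro w _ hw
      rw [indicator_of_notMem]
      rw [mem_cell f s idx hidx]
      exact fun h => hw h.symm
    · simp
  simp_rw [h1]
  rw [integral_finsetSum]
  · apply Finset.sum_congr rfl
    intro w _
    rw [integral_indicator_const _ (measurable_cell f hf s hs n w), smul_eq_mul]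
  · intro w _
    exact (integrable_const _).indicator (measurable_cell f hf s hs n w)

lemma sum_cell (f : X → X) (hf : Measurable f) (μ : Measure X) [IsProbabilityMeasure μ]
    (s : Finset (Set X)) (hs : IsFinPartition s) (n : ℕ) :
    ∑ w, μ.real (cell f s n w) = 1 := by
  obtain ⟨idx, hidx⟩ := exists_idx s hs
  have := integral_word f hf μ s hs idx hidx n (fun _ => 1)
  simpa using this.symm

lemma frontier_cell (f : X → X) (hf : Continuous f) (μ : Measure X)
    (hmp : MeasurePreserving f μ μ) (s : Finset (Set X)) (hfr : ∀ A ∈ s, μ (frontier A) = 0)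
    (n : ℕ) (w : Fin n → {A // A ∈ s}) : μ (frontier (cell f s n w)) = 0 := by
  have h0 : ∀ i : Fin n, μ (f^[(i : ℕ)] ⁻¹' frontier (w i : Set X)) = 0 := by
    intro i
    rw [(hmp.iterate i).measure_preimage isClosed_frontier.measurableSet.nullMeasurableSet]
    exact hfr _ (w i).2
  have hsub : frontier (cell f s n w) ⊆ ⋃ i : Fin n, f^[(i : ℕ)] ⁻¹' frontier (w i : Set X) := by
    intro x hx
    by_contra hc
    simp only [mem_iUnion, mem_preimage, not_exists] at hc
    rw [frontier, Set.mem_sdiff] at hx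
    apply hx.2
    rw [cell, interior_iInter_of_finite, mem_iInter]
    intro i
    have hxi : x ∈ closure (f^[(i : ℕ)] ⁻¹' (w i : Set X)) :=
      closure_mono (iInter_subset _ i) hx.1
    by_contra hni
    have : x ∈ frontier (f^[(i : ℕ)] ⁻¹' (w i : Set X)) := ⟨hxi, hni⟩
    exact hc i ((hf.iterate i).frontier_preimage_subset _ this)
  refine measure_mono_null hsub ?_
  rw [measure_iUnion_null_iff]
  exact h0

lemma upper_core [CompactSpace X] (f : X → X) (hf : Continuous f) (ν : ProbabilityMeasure X)
    (hmp : MeasurePreserving f (ν : Measure X) (ν : Measure X)) (s : Finset (Set X))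
    (hs : IsFinPartition s) (hfr : ∀ A ∈ s, (ν : Measure X) (frontier A) = 0) (ε : ℝ)
    (hd : ∀ A ∈ s, ∀ x ∈ A, ∀ y ∈ A, dist x y ≤ ε) (q : ℕ) (hq : 0 < q) (a : ℝ)
    (ha : dynH f ν s q / q < a) :
    ∃ F ∈ nhds ν, ∃ C : ℝ, 0 < C ∧ ∀ n : ℕ, 0 < n → ∀ E : Finset X, ↑E ⊆ Xnf f n F →
      IsNSep f n ε ↑E → (E.card : ℝ) ≤ C * Real.exp (n * a) := by
  classical
  obtain ⟨idx, hidx⟩ := exists_idx s hs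
  have hq' : (0 : ℝ) < q := by exact_mod_cast hq
  rw [div_lt_iff₀ hq'] at ha
  set m : (Fin q → {A // A ∈ s}) → ℝ := fun w => (ν : Measure X).real (cell f s q w) with hm
  have hm0 : ∀ w, 0 ≤ m w := fun w => measureReal_nonneg
  have hm1 : ∑ w, m w = 1 := sum_cell f hf.measurable _ s hs q
  set N : ℝ := (Fintype.card (Fin q → {A // A ∈ s}) : ℝ) with hN
  have hNpos : 0 < N := by
    rw [hN]
    have : Nonempty (Fin q → {A // A ∈ s}) := by
      by_contra hne
      rw [not_nonempty_iff] at hne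
      simp at hm1
    exact_mod_cast Fintype.card_pos
  -- margin
  set γ : ℝ := (a * q - dynH f ν s q) / 2 with hγ
  have hγ0 : 0 < γ := by rw [hγ]; linarith
  set θ : ℝ := γ / N with hθ
  have hθ0 : 0 < θ := div_pos hγ0 hNpos
  have hθN : θ * N = γ := by rw [hθ]; field_simp
  set p : (Fin q → {A // A ∈ s}) → ℝ := fun w => (m w + θ) * Real.exp (-γ) with hpdef
  have hp0 : ∀ w, 0 < p w := fun w => mul_pos (by linarith [hm0 w]) (Real.exp_pos _)
  have hps : ∑ w, p w ≤ 1 := by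
    rw [hpdef, ← Finset.sum_mul, Finset.sum_add_distrib, hm1]
    simp only [Finset.sum_const, Finset.card_univ, nsmul_eq_mul]
    rw [← hN, mul_comm N, hθN]
    have := Real.add_one_le_exp γ
    calc (1 + γ) * Real.exp (-γ) ≤ Real.exp γ * Real.exp (-γ) := by gcongr; linarith
      _ = 1 := by rw [← Real.exp_add]; simp
  have hlog : -(dynH f ν s q) - γ ≤ ∑ w, m w * Real.log (p w) := by
    have h1 : ∀ w, m w * Real.log (m w) - γ * m w ≤ m w * Real.log (p w) := by
      intro w
      rcases (hm0 w).eq_or_lt with h0 | h0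
      · rw [← h0]; simp
      · have h2 : Real.log (p w) = Real.log (m w + θ) - γ := by
          rw [hpdef, Real.log_mul (by linarith) (Real.exp_pos _).ne', Real.log_exp]; ring
        have h3 : Real.log (m w) ≤ Real.log (m w + θ) := Real.log_le_log h0 (by linarith)
        rw [h2]
        nlinarith
    have h4 := Finset.sum_le_sum fun w (_ : w ∈ Finset.univ) => h1 w
    rw [Finset.sum_sub_distrib, ← Finset.mul_sum, hm1] at h4
    rw [dynH_eq]
    linarith
  let g : X → ℝ := fun x => Real.log (p fun i : Fin q => idx (f^[(i : ℕ)] x))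
  have hgint : ∀ ρ : ProbabilityMeasure X, ∫ x, g x ∂(ρ : Measure X) =
      ∑ w, (ρ : Measure X).real (cell f s q w) * Real.log (p w) := fun ρ =>
    integral_word f hf.measurable ρ s hs idx hidx q (fun w => Real.log (p w))
  have hcont : Tendsto (fun ρ : ProbabilityMeasure X => ∫ x, g x ∂(ρ : Measure X)) (nhds ν)
      (nhds (∫ x, g x ∂(ν : Measure X))) := by
    simp_rw [hgint]
    apply tendsto_finsetSum
    intro w _
    apply Tendsto.mul_const
    have h5 := ProbabilityMeasure.tendsto_measure_of_null_frontier_of_tendsto' (μ := ν)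
      (μs := id) (L := nhds ν) tendsto_id (E := cell f s q w)
      (frontier_cell f hf _ hmp s hfr q w)
    exact (ENNReal.tendsto_toReal (measure_ne_top _ _)).comp h5
  refine ⟨{ρ | -(q * a) < ∫ x, g x ∂(ρ : Measure X)}, hcont.eventually (lt_mem_nhds ?_),
    q * ((Fintype.card {A // A ∈ s} : ℝ) ^ q) ^ 2, ?_, ?_⟩
  · rw [hgint]
    have : ∑ w, (ν : Measure X).real (cell f s q w) * Real.log (p w) = ∑ w, m w * Real.log (p w) := rfl
    rw [this, hγ] at *
    linarith
  · have : 0 < Fintype.card {A // A ∈ s} := by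
      rcases isEmpty_or_nonempty {A // A ∈ s} with h | h
      · exfalso
        obtain ⟨x⟩ := (inferInstance : NeZero (ν : Measure X)).out |> fun _ => ν.nonempty
        exact h.elim (idx x)
      · exact Fintype.card_pos
    positivity
  · intro n hn E hE hsep
    have hn' : (0 : ℝ) < n := by exact_mod_cast hn
    apply count_bound E (fun x i => idx (f^[i] x)) n q hq ?_ p hp0 hps a
    · intro x hx
      have h6 := hE hx
      rw [mem_Xnf f x hn, mem_ofPred_eq, coe_emp, integral_empiric, inv_mul_eq_div,
        lt_div_iff₀ hn'] at h6
      have h7 : birk f g n x = ∑ i ∈ Finset.range n,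
          Real.log (p fun r : Fin q => idx (f^[i + r] x)) := by
        apply Finset.sum_congr rfl
        intro i _
        simp only [g]
        congr 2
        funext r
        rw [← Function.iterate_add_apply, add_comm]
      rw [← h7]
      nlinarith
    · intro x hx y hy hxy
      by_contra hne
      obtain ⟨j, hj, hlt⟩ := hsep x hx y hy hne
      have h1 := (hidx (f^[j] x) (idx (f^[j] x))).2 rfl
      have h2 := (hidx (f^[j] y) (idx (f^[j] x))).2 (hxy j hj).symm
      exact absurd (hd _ (idx (f^[j] x)).2 _ h1 _ h2) (not_le.2 hlt)

end Part
end SPaux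

open MeasureTheory Filter Set
open scoped ENNReal NNReal
open Paper

set_option linter.unusedSectionVars false

namespace SPaux

section Lower
variable {X : Type*} [MetricSpace X] [MeasurableSpace X] [BorelSpace X]

lemma exists_partition [CompactSpace X] (μ : Measure X) [IsProbabilityMeasure μ] (ε : ℝ)
    (hε : 0 < ε) : ∃ s : Finset (Set X), IsFinPartition s ∧ (∀ A ∈ s, μ (frontier A) = 0) ∧
      ∀ A ∈ s, ∀ x ∈ A, ∀ y ∈ A, dist x y ≤ ε := by
  classical
  have hr : ∀ x : X, ∃ r, 0 < r ∧ r < ε / 2 ∧ μ (frontier (Metric.ball x r)) = 0 := by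
    intro x
    obtain ⟨r, hr, h⟩ := exists_null_frontier_thickening μ {x} (half_pos hε)
    rw [Metric.thickening_singleton] at h
    exact ⟨r, hr.1, hr.2, h⟩
  choose r hr0 hr1 hr2 using hr
  obtain ⟨t, ht⟩ := (isCompact_univ (X := X)).elim_nhds_subcover (fun x => Metric.ball x (r x))
    (fun x _ => Metric.ball_mem_nhds x (hr0 x))
  replace ht := ht.2
  let κ : X → Finset X := fun x => t.filter (fun z => x ∈ Metric.ball z (r z))
  refine ⟨t.powerset.image (fun u => κ ⁻¹' {u}), ⟨?_, ?_, ?_⟩, ?_, ?_⟩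
  · intro A hA
    obtain ⟨u, hu, rfl⟩ := Finset.mem_image.1 hA
    rw [Finset.mem_powerset] at hu
    have : κ ⁻¹' {u} = ⋂ z ∈ t, (if z ∈ u then Metric.ball z (r z) else (Metric.ball z (r z))ᶜ) := by
      ext x
      simp only [κ, mem_preimage, mem_singleton_iff, mem_iInter, Finset.ext_iff, Finset.mem_filter]
      constructor
      · intro h z hz
        have := h z
        split_ifs with hzu
        · exact (this.2 hzu).2
        · exact fun hx => hzu (this.1 ⟨hz, hx⟩)
      · intro h z
        constructor
        · rintro ⟨hz, hx⟩
          by_contra hzu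
          have := h z hz
          rw [if_neg hzu] at this
          exact this hx
        · intro hzu
          have := h z (hu hzu)
          rw [if_pos hzu] at this
          exact ⟨hu hzu, this⟩
    rw [this]
    refine Finset.measurableSet_biInter _ fun z _ => ?_
    split_ifs
    · exact measurableSet_ball
    · exact measurableSet_ball.compl
  · rw [eq_univ_iff_forall]
    intro x
    refine ⟨κ ⁻¹' {κ x}, ?_, rfl⟩
    rw [Finset.mem_coe, Finset.mem_image]
    exact ⟨κ x, Finset.mem_powerset.2 (Finset.filter_subset _ _), rfl⟩
  · intro A hA B hB hAB
    rw [Finset.mem_coe] at hA hB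
    obtain ⟨u, hu, rfl⟩ := Finset.mem_image.1 hA
    obtain ⟨v, hv, rfl⟩ := Finset.mem_image.1 hB
    rw [Set.disjoint_left]
    intro x hx hx'
    apply hAB
    rw [mem_preimage, mem_singleton_iff] at hx hx'
    rw [← hx, ← hx']
  · intro A hA
    obtain ⟨u, hu, rfl⟩ := Finset.mem_image.1 hA
    have hsub : frontier (κ ⁻¹' {u}) ⊆ ⋃ z ∈ t, frontier (Metric.ball z (r z)) := by
      intro x hx
      by_contra hc
      simp only [mem_iUnion, not_exists] at hc
      have h1 : ∀ z ∈ t, ∀ᶠ y in nhds x, (y ∈ Metric.ball z (r z) ↔ x ∈ Metric.ball z (r z)) := by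
        intro z hz
        have h2 := hc z hz
        by_cases hxz : x ∈ Metric.ball z (r z)
        · filter_upwards [Metric.isOpen_ball.mem_nhds hxz] with y hy
          exact ⟨fun _ => hxz, fun _ => hy⟩
        · have h3 : x ∉ closure (Metric.ball z (r z)) := fun h =>
            h2 ⟨h, fun h' => hxz (interior_subset h')⟩
          filter_upwards [isClosed_closure.isOpen_compl.mem_nhds h3] with y hy
          exact ⟨fun h => absurd (subset_closure h) hy, fun h => absurd h hxz⟩
      have h4 : ∀ᶠ y in nhds x, κ y = κ x := by
        filter_upwards [(Filter.eventually_all_finset t).2 h1] with y hy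
        exact Finset.filter_congr hy
      by_cases hxu : κ x = u
      · apply hx.2
        rw [mem_interior_iff_mem_nhds]
        filter_upwards [h4] with y hy
        rw [mem_preimage, hy, hxu]; rfl
      · have := mem_closure_iff_frequently.1 hx.1
        obtain ⟨y, hy1, hy2⟩ := (this.and_eventually h4).exists
        exact hxu (hy2.symm.trans hy1)
    refine measure_mono_null hsub ?_
    exact (measure_biUnion_null_iff t.countable_toSet).2 fun z _ => hr2 z
  · intro A hA x hx y hy
    obtain ⟨u, hu, rfl⟩ := Finset.mem_image.1 hA
    have hxc := ht (mem_univ x)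
    simp only [mem_iUnion] at hxc
    obtain ⟨z, hz, hxz⟩ := hxc
    rw [mem_preimage, mem_singleton_iff] at hx hy
    have h1 : z ∈ κ y := by
      rw [hy, ← hx]
      exact Finset.mem_filter.2 ⟨hz, hxz⟩
    have h2 := (Finset.mem_filter.1 h1).2
    rw [Metric.mem_ball] at hxz h2
    have := dist_triangle_right x y z
    linarith [hr1 z]

lemma entropy_le (f : X → X) (hf : Measurable f) (μ : Measure X) [IsProbabilityMeasure μ]
    (s : Finset (Set X)) (hs : IsFinPartition s) (idx : X → {A // A ∈ s})
    (hidx : ∀ x (A : {A // A ∈ s}), x ∈ (A : Set X) ↔ idx x = A) (n : ℕ) (G : Set X)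
    (hG : G.Nonempty) (κ : ℝ) (hκ : μ.real Gᶜ ≤ κ) (W : Finset (Fin n → {A // A ∈ s}))
    (hW : ∀ x ∈ G, (fun i : Fin n => idx (f^[(i : ℕ)] x)) ∈ W) :
    dynH f μ s n ≤ Real.log 2 + Real.log W.card + κ * (n * Real.log (Fintype.card {A // A ∈ s})) := by
  classical
  obtain ⟨x0, hx0⟩ := hG
  have hW0 : (0 : ℝ) < W.card := by
    exact_mod_cast Finset.card_pos.2 ⟨_, hW x0 hx0⟩
  have hW1 : (1 : ℝ) ≤ W.card := by
    exact_mod_cast Finset.card_pos.2 ⟨_, hW x0 hx0⟩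
  have : Nonempty {A // A ∈ s} := ⟨idx x0⟩
  set k : ℝ := (Fintype.card {A // A ∈ s} : ℝ) with hk
  have hk1 : 1 ≤ k := by
    rw [hk]; exact_mod_cast Fintype.card_pos
  have hk0 : 0 < k := by linarith
  have hlk : 0 ≤ Real.log k := Real.log_nonneg hk1
  set m : (Fin n → {A // A ∈ s}) → ℝ := fun w => μ.real (cell f s n w) with hm
  have hm0 : ∀ w, 0 ≤ m w := fun w => measureReal_nonneg
  have hm1 : ∑ w, m w = 1 := sum_cell f hf _ s hs n
  let q : (Fin n → {A // A ∈ s}) → ℝ := fun w => if w ∈ W then 1 / (2 * W.card) else 1 / (2 * k ^ n)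
  have hq0 : ∀ w, 0 < q w := by
    intro w; simp only [q]; split_ifs <;> positivity
  have hqs : ∑ w, q w ≤ ∑ w, m w := by
    rw [hm1]
    calc ∑ w, q w ≤ ∑ w, ((if w ∈ W then 1 / (2 * (W.card : ℝ)) else 0) + 1 / (2 * k ^ n)) := by
          apply Finset.sum_le_sum
          intro w _
          simp only [q]
          have : 0 < 1 / (2 * k ^ n) := by positivity
          split_ifs <;> linarith
      _ = 1 := by
          rw [Finset.sum_add_distrib, Finset.sum_ite_mem]
          simp only [Finset.univ_inter, Finset.sum_const, nsmul_eq_mul, Finset.card_univ,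
            Fintype.card_fun, Fintype.card_fin]
          push_cast
          rw [← hk]
          field_simp
          norm_num
  have h1 := gibbs m q hm0 hq0 hqs
  rw [dynH_eq]
  refine h1.trans ?_
  have h2 : ∀ w, -(m w * Real.log (q w)) ≤ m w * (Real.log 2 + Real.log W.card) +
      (if w ∈ W then 0 else m w) * (n * Real.log k) := by
    intro w
    simp only [q]
    split_ifs with hw
    · rw [Real.log_div one_ne_zero (by positivity), Real.log_one, Real.log_mul two_ne_zero hW0.ne']
      apply le_of_eq; ring
    · rw [Real.log_div one_ne_zero (by positivity), Real.log_one,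
        Real.log_mul two_ne_zero (by positivity), Real.log_pow]
      have := mul_nonneg (hm0 w) (Real.log_nonneg hW1)
      nlinarith
  have h3 := Finset.sum_le_sum fun w (_ : w ∈ Finset.univ) => h2 w
  rw [Finset.sum_neg_distrib, Finset.sum_add_distrib, ← Finset.sum_mul, ← Finset.sum_mul, hm1,
    one_mul] at h3
  refine h3.trans ?_
  gcongr
  refine le_trans ?_ hκ
  have h4 : ∑ w, (if w ∈ W then 0 else m w) = ∑ w ∈ Finset.univ.filter (fun w => w ∉ W), m w := by
    rw [Finset.sum_filter]
    apply Finset.sum_congr rfl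
    intro w _
    by_cases hw : w ∈ W <;> simp [hw]
  rw [h4, ← measureReal_biUnion_finset]
  · apply measureReal_mono
    · intro x hx hxG
      simp only [mem_iUnion, Finset.mem_filter, Finset.mem_univ, true_and] at hx
      obtain ⟨w, hw, hxw⟩ := hx
      rw [mem_cell f s idx hidx] at hxw
      exact hw (hxw ▸ hW x hxG)
    · exact measure_ne_top _ _
  · intro w _ w' _ hne
    rw [Function.onFun, Set.disjoint_left]
    intro x hx hx'
    rw [mem_cell f s idx hidx] at hx hx'
    exact hne (hx.symm.trans hx')
  · intro w _
    exact measurable_cell f hf s hs n w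

lemma hamming_count {S : Type*} [Fintype S] [DecidableEq S] (n : ℕ) (w : Fin n → S) (R τ : ℝ)
    (hτ : 0 ≤ τ) :
    (((Finset.univ : Finset (Fin n → S)).filter
      (fun v => ((Finset.univ.filter fun i => v i ≠ w i).card : ℝ) ≤ R)).card : ℝ) ≤
      Real.exp (τ * R + n * (Fintype.card S * Real.exp (-τ))) := by
  set B := ((Finset.univ : Finset (Fin n → S)).filter
      (fun v => ((Finset.univ.filter fun i => v i ≠ w i).card : ℝ) ≤ R)) with hB
  let e : Fin n → S → ℝ := fun i c => if c ≠ w i then Real.exp (-τ) else 1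
  have he0 : ∀ i c, 0 ≤ e i c := by
    intro i c; simp only [e]; split_ifs <;> positivity
  have h1 : (B.card : ℝ) * Real.exp (-(τ * R)) ≤ ∑ v : Fin n → S, ∏ i, e i (v i) := by
    calc (B.card : ℝ) * Real.exp (-(τ * R)) = ∑ v ∈ B, Real.exp (-(τ * R)) := by simp
      _ ≤ ∑ v ∈ B, ∏ i, e i (v i) := by
          apply Finset.sum_le_sum
          intro v hv
          have hv' := (Finset.mem_filter.1 hv).2
          simp only [e]
          rw [Finset.prod_ite]
          simp only [Finset.prod_const, one_pow, mul_one]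
          rw [← Real.exp_nat_mul]
          apply Real.exp_le_exp.2
          nlinarith
      _ ≤ _ := Finset.sum_le_univ_sum_of_nonneg fun v => Finset.prod_nonneg fun i _ => he0 _ _
  have h2 : ∑ v : Fin n → S, ∏ i, e i (v i) ≤ Real.exp (n * (Fintype.card S * Real.exp (-τ))) := by
    have h8 := Finset.prod_univ_sum (fun _ : Fin n => (Finset.univ : Finset S)) e
    rw [Fintype.piFinset_univ] at h8
    rw [← h8, Real.exp_nat_mul]
    calc ∏ i, ∑ c, e i c ≤ ∏ i : Fin n, Real.exp (Fintype.card S * Real.exp (-τ)) := by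
          apply Finset.prod_le_prod
          · exact fun i _ => Finset.sum_nonneg fun c _ => he0 _ _
          · intro i _
            calc ∑ c, e i c ≤ ∑ c, ((if c = w i then 1 else 0) + Real.exp (-τ)) := by
                  apply Finset.sum_le_sum
                  intro c _
                  simp only [e]
                  have := Real.exp_pos (-τ)
                  by_cases hc : c = w i <;> simp [hc]
                  linarith
              _ = Fintype.card S * Real.exp (-τ) + 1 := by
                  rw [Finset.sum_add_distrib]
                  simp [add_comm]
              _ ≤ _ := Real.add_one_le_exp _
      _ = _ := by simp
  calc (B.card : ℝ) = (B.card : ℝ) * Real.exp (-(τ * R)) * Real.exp (τ * R) := by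
        rw [mul_assoc, ← Real.exp_add]; simp
    _ ≤ Real.exp (n * (Fintype.card S * Real.exp (-τ))) * Real.exp (τ * R) :=
        mul_le_mul_of_nonneg_right (h1.trans h2) (Real.exp_pos _).le
    _ = _ := by rw [← Real.exp_add, add_comm]

open Classical in
lemma sepCount_eq (f : X → X) (ε : ℝ) (n : ℕ) (x y : X) :
    sepCount f ε n x y = ((Finset.range n).filter fun j => ε < dist (f^[j] x) (f^[j] y)).card := by
  rw [sepCount]
  exact Nat.subtype_card _ (by simp)

/-- A maximal separated set spans. -/
lemma exists_maximal (f : X → X) (δ ε : ℝ) (hδ : 0 < δ) (hε : 0 < ε) (n : ℕ) (hn : 0 < n)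
    (G : Set X) (M : ℝ)
    (hM : ∀ E : Finset X, ↑E ⊆ G → IsDeltaSep f δ n ε ↑E → (E.card : ℝ) < M) :
    ∃ E : Finset X, ↑E ⊆ G ∧ IsDeltaSep f δ n ε ↑E ∧
      ∀ x ∈ G, ∃ y ∈ E, (sepCount f ε n x y : ℝ) < δ * n := by
  classical
  have hn' : (0 : ℝ) < n := by exact_mod_cast hn
  have hself : ∀ x, sepCount f ε n x x = 0 := by
    intro x
    rw [sepCount_eq, Finset.card_eq_zero]
    apply Finset.filter_false_of_mem
    intro j _
    simpa using hε.le
  have hsymm : ∀ x y, sepCount f ε n x y = sepCount f ε n y x := by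
    intro x y
    simp only [sepCount_eq, dist_comm]
  let Q : Set ℕ := {m | ∃ E : Finset X, ↑E ⊆ G ∧ IsDeltaSep f δ n ε ↑E ∧ E.card = m}
  have hQne : Q.Nonempty := ⟨0, ∅, by simp, by intro x hx; simp at hx, rfl⟩
  have hQb : BddAbove Q := by
    refine ⟨⌈M⌉₊, ?_⟩
    rintro m ⟨E, h1, h2, rfl⟩
    have := (hM E h1 h2).le.trans (Nat.le_ceil M)
    exact_mod_cast this
  obtain ⟨E, h1, h2, h3⟩ := Nat.sSup_mem hQne hQb
  refine ⟨E, h1, h2, ?_⟩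
  intro x hx
  by_contra hc
  push Not at hc
  have hxE : x ∉ E := by
    intro hxE
    have := hc x hxE
    rw [hself] at this
    have := mul_pos hδ hn'
    simp at *
    linarith
  have hmem : (insert x E).card ∈ Q := by
    refine ⟨insert x E, ?_, ?_, rfl⟩
    · intro y hy
      rw [Finset.coe_insert] at hy
      rcases hy with rfl | hy
      · exact hx
      · exact h1 hy
    · intro y hy z hz hyz
      rw [Finset.mem_coe, Finset.mem_insert] at hy hz
      rcases hy with rfl | hy <;> rcases hz with rfl | hz
      · exact absurd rfl hyz
      · exact hc z hz
      · rw [hsymm]; exact hc y hy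
      · exact h2 y hy z hz hyz
  have := le_csSup hQb hmem
  rw [← h3, Finset.card_insert_of_notMem hxE] at this
  omega

end Lower
end SPaux

open MeasureTheory Filter Set
open scoped ENNReal NNReal
open Paper

set_option linter.unusedSectionVars false

namespace SPaux

section LowerCore
variable {X : Type*} [MetricSpace X] [MeasurableSpace X] [BorelSpace X]

open Classical in
/-- Number of visits to `U`. -/
noncomputable def visits (f : X → X) (U : Set X) (n : ℕ) (x : X) : ℕ :=
  ((Finset.range n).filter fun j => f^[j] x ∈ U).card

lemma visits_markov (f : X → X) (μ : Measure X) [IsProbabilityMeasure μ]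
    (hmp : MeasurePreserving f μ μ) (U : Set X) (hU : MeasurableSet U) (n : ℕ) (hn : 0 < n)
    (σ η : ℝ) (hσ : 0 < σ) (hη : μ.real U ≤ η) :
    μ.real {x | σ * n ≤ (visits f U n x : ℝ)} ≤ η / σ := by
  classical
  have hn' : (0 : ℝ) < n := by exact_mod_cast hn
  have h1 : ∀ x, (visits f U n x : ℝ) = ∑ j ∈ Finset.range n, (f^[j] ⁻¹' U).indicator (fun _ => (1 : ℝ)) x := by
    intro x
    rw [visits, Finset.card_filter]
    push_cast
    rfl
  have hintg : ∀ j ∈ Finset.range n, Integrable ((f^[j] ⁻¹' U).indicator (fun _ => (1 : ℝ))) μ :=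
    fun j _ => (integrable_const _).indicator ((hmp.measurable.iterate j) hU)
  have h2 : ∫ x, (visits f U n x : ℝ) ∂μ = n * μ.real U := by
    simp_rw [h1]
    rw [integral_finsetSum _ hintg]
    have : ∀ j ∈ Finset.range n, ∫ x, (f^[j] ⁻¹' U).indicator (fun _ => (1 : ℝ)) x ∂μ = μ.real U := by
      intro j _
      rw [integral_indicator_const _ ((hmp.measurable.iterate j) hU), smul_eq_mul, mul_one,
        measureReal_def, (hmp.iterate j).measure_preimage hU.nullMeasurableSet, measureReal_def]
    rw [Finset.sum_congr rfl this]
    simp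
  have h3 : Integrable (fun x => (visits f U n x : ℝ)) μ := by
    simp_rw [h1]
    exact integrable_finsetSum _ hintg
  have h4 := mul_meas_ge_le_integral_of_nonneg (μ := μ) (f := fun x => (visits f U n x : ℝ))
    (Eventually.of_forall fun x => Nat.cast_nonneg _) h3 (σ * n)
  rw [h2] at h4
  rw [le_div_iff₀ hσ]
  have h5 : n * (μ.real {x | σ * n ≤ (visits f U n x : ℝ)} * σ) ≤ n * η := by
    calc _ = σ * n * μ.real {x | σ * n ≤ (visits f U n x : ℝ)} := by ring
      _ ≤ n * μ.real U := h4
      _ ≤ n * η := by gcongr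
  exact le_of_mul_le_mul_left h5 hn'

lemma exists_compacts (μ : Measure X) [IsProbabilityMeasure μ] [CompactSpace X]
    (s : Finset (Set X)) (hs : IsFinPartition s) (idx : X → {A // A ∈ s})
    (hidx : ∀ x (A : {A // A ∈ s}), x ∈ (A : Set X) ↔ idx x = A) (η : ℝ) (hη : 0 < η) :
    ∃ (U : Set X) (ε : ℝ), 0 < ε ∧ MeasurableSet U ∧ μ.real U ≤ η ∧
      ∀ x y, x ∉ U → y ∉ U → dist x y ≤ ε → idx x = idx y := by
  classical
  obtain ⟨x0⟩ : Nonempty X := μ.nonempty_of_neZero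
  have : Nonempty {A // A ∈ s} := ⟨idx x0⟩
  set k : ℝ := (Fintype.card {A // A ∈ s} : ℝ) with hk
  have hk0 : 0 < k := by
    rw [hk]; exact_mod_cast Fintype.card_pos
  have hK : ∀ A : {A // A ∈ s}, ∃ K ⊆ (A : Set X), IsClosed K ∧
      μ ((A : Set X) \ K) < ENNReal.ofReal (η / k) := by
    intro A
    exact (hs.1 A A.2).exists_isClosed_sdiff_lt (measure_ne_top _ _)
      (by simpa using div_pos hη hk0)
  choose K hKA hKc hKm using hK
  have hev : ∀ᶠ ε in nhdsWithin (0 : ℝ) (Ioi 0), ∀ p : {A // A ∈ s} × {A // A ∈ s}, p.1 ≠ p.2 →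
      ∀ x ∈ K p.1, ∀ y ∈ K p.2, ε < dist x y := by
    rw [Filter.eventually_all]
    rintro ⟨A, B⟩
    by_cases hAB : A = B
    · exact Eventually.of_forall fun ε h => absurd hAB h
    have hdis : Disjoint (K A) (K B) := by
      rw [Set.disjoint_left]
      intro x hx hx'
      exact hAB (((hidx x A).1 (hKA A hx)).symm.trans ((hidx x B).1 (hKA B hx')))
    obtain ⟨r, hr0, hr⟩ := Metric.exists_pos_forall_lt_edist (hKc A).isCompact (hKc B) hdis
    have hr0' : (0 : ℝ) < r := by exact_mod_cast hr0
    filter_upwards [Ioo_mem_nhdsGT hr0'] with ε hε _ x hx y hy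
    have := hr x hx y hy
    rw [edist_nndist] at this
    have h2 : (r : ℝ) < dist x y := by
      rw [← coe_nndist]
      exact_mod_cast this
    exact hε.2.trans h2
  obtain ⟨ε, hε, hε0⟩ := (hev.and self_mem_nhdsWithin).exists
  refine ⟨⋃ A : {A // A ∈ s}, (A : Set X) \ K A, ε, hε0, ?_, ?_, ?_⟩
  · exact MeasurableSet.iUnion fun A => (hs.1 A A.2).diff (hKc A).measurableSet
  · refine (measureReal_iUnion_fintype_le _).trans ?_
    calc ∑ A : {A // A ∈ s}, μ.real ((A : Set X) \ K A) ≤ ∑ A : {A // A ∈ s}, η / k := by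
          apply Finset.sum_le_sum
          intro A _
          rw [measureReal_def]
          exact ENNReal.toReal_le_of_le_ofReal (div_pos hη hk0).le (hKm A).le
      _ = η := by
          rw [Finset.sum_const, nsmul_eq_mul, Finset.card_univ, ← hk]
          field_simp
  · intro x y hx hy hxy
    by_contra hne
    have hx' : ∀ x, x ∉ (⋃ A : {A // A ∈ s}, (A : Set X) \ K A) → x ∈ K (idx x) := by
      intro x hx
      by_contra hc
      exact hx (mem_iUnion.2 ⟨idx x, (hidx x _).2 rfl, hc⟩)
    exact absurd (hε (idx x, idx y) hne x (hx' x hx) y (hx' y hy)) (not_lt.2 hxy)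

lemma lower_core [CompactSpace X] (f : X → X) (hf : Continuous f) (ν : ProbabilityMeasure X)
    (herg : Ergodic f (ν : Measure X)) (s : Finset (Set X)) (hs : IsFinPartition s) (a a' : ℝ)
    (haa : a' < a) (ha : ∀ᶠ n : ℕ in atTop, a < dynH f ν s n / n) :
    ∃ ε > 0, ∃ δ > 0, ∀ F ∈ nhds ν, ∀ᶠ n : ℕ in atTop, ∃ E : Finset X,
      ↑E ⊆ Xnf f n F ∧ IsDeltaSep f δ n ε ↑E ∧ Real.exp (n * a') ≤ E.card := by
  classical
  have hmp := herg.toMeasurePreserving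
  obtain ⟨idx, hidx⟩ := exists_idx s hs
  obtain ⟨x0⟩ : Nonempty X := (ν : Measure X).nonempty_of_neZero
  have : Nonempty {A // A ∈ s} := ⟨idx x0⟩
  set k : ℝ := (Fintype.card {A // A ∈ s} : ℝ) with hk
  have hk1 : 1 ≤ k := by
    rw [hk]; exact_mod_cast Fintype.card_pos
  have hk0 : 0 < k := by linarith
  have hlk : 0 ≤ Real.log k := Real.log_nonneg hk1
  set d := a - a' with hd
  have hd0 : 0 < d := by rw [hd]; linarith
  obtain ⟨τ, hτ0, hτ⟩ : ∃ τ : ℝ, 0 < τ ∧ k * Real.exp (-τ) ≤ d / 8 := by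
    have h1 : Tendsto (fun τ : ℝ => k * Real.exp (-τ)) atTop (nhds (k * 0)) :=
      (Real.tendsto_exp_neg_atTop_nhds_zero).const_mul k
    rw [mul_zero] at h1
    have h2 := h1.eventually (gt_mem_nhds (show (0 : ℝ) < d / 8 by linarith))
    obtain ⟨τ, h3, h4⟩ := (h2.and (eventually_gt_atTop 0)).exists
    exact ⟨τ, h4, h3.le⟩
  set ρ := d / (8 * τ) with hρ
  have hρ0 : 0 < ρ := by positivity
  have hρτ : τ * ρ = d / 8 := by rw [hρ]; field_simp
  set κ := min (1 / 2) (d / (8 * (Real.log k + 1))) with hκ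
  have hκ0 : 0 < κ := by
    rw [hκ]; apply lt_min (by norm_num); positivity
  have hκ1 : κ < 1 := (min_le_left _ _).trans_lt (by norm_num)
  have hκk : κ * Real.log k ≤ d / 8 := by
    have h1 : κ ≤ d / (8 * (Real.log k + 1)) := min_le_right _ _
    rw [le_div_iff₀ (by positivity)] at h1
    nlinarith
  obtain ⟨U, ε, hε0, hUm, hU, hUidx⟩ := exists_compacts (ν : Measure X) s hs idx hidx
    (ρ / 4 * (κ / 2)) (by positivity)
  refine ⟨ε, hε0, ρ / 4, by positivity, ?_⟩
  intro F hF
  have hX := tendsto_Xnf f ν herg F hF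
  have hX' : ∀ᶠ n : ℕ in atTop, (ν : Measure X) (Xnf f n F)ᶜ < ENNReal.ofReal (κ / 2) :=
    hX.eventually (gt_mem_nhds (by simpa using hκ0))
  have hlog : ∀ᶠ n : ℕ in atTop, Real.log 2 ≤ n * (d / 8) := by
    have h1 : Tendsto (fun n : ℕ => (n : ℝ) * (d / 8)) atTop atTop :=
      tendsto_natCast_atTop_atTop.atTop_mul_const (by linarith)
    exact h1.eventually_ge_atTop _
  filter_upwards [hX', hlog, ha, eventually_gt_atTop 0] with n h1 h2 h3 hn
  have hn' : (0 : ℝ) < n := by exact_mod_cast hn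
  rw [lt_div_iff₀ hn'] at h3
  by_contra hcon
  push Not at hcon
  set G : Set X := Xnf f n F ∩ {x | (visits f U n x : ℝ) < ρ / 4 * n} with hG
  have hGc : (ν : Measure X).real Gᶜ ≤ κ := by
    have e : Gᶜ = (Xnf f n F)ᶜ ∪ {x | ρ / 4 * n ≤ (visits f U n x : ℝ)} := by
      rw [hG, compl_inter]
      congr 1
      ext x
      simp
    rw [e]
    refine (measureReal_union_le _ _).trans ?_
    have h4 : (ν : Measure X).real (Xnf f n F)ᶜ ≤ κ / 2 := by
      rw [measureReal_def]
      exact ENNReal.toReal_le_of_le_ofReal (by linarith) h1.le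
    have h5 := visits_markov f (ν : Measure X) hmp U hUm n hn (ρ / 4) _ (by positivity) hU
    have h6 : ρ / 4 * (κ / 2) / (ρ / 4) = κ / 2 := by field_simp
    rw [h6] at h5
    linarith
  have hGne : G.Nonempty := by
    rw [nonempty_iff_ne_empty]
    intro hGe
    rw [hGe, compl_empty] at hGc
    simp at hGc
    linarith
  obtain ⟨E, hE1, hE2, hE3⟩ := exists_maximal f (ρ / 4) ε (by positivity) hε0 n hn G
    (Real.exp (n * a')) (fun E hE hE' => hcon E (hE.trans inter_subset_left) hE')
  have hEc := hcon E (hE1.trans inter_subset_left) hE2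
  let word : X → (Fin n → {A // A ∈ s}) := fun x i => idx (f^[(i : ℕ)] x)
  let ball : X → Finset (Fin n → {A // A ∈ s}) := fun y => Finset.univ.filter
      (fun v => ((Finset.univ.filter fun i => v i ≠ word y i).card : ℝ) ≤ ρ * n)
  have hball : ∀ y, ((ball y).card : ℝ) ≤ Real.exp (n * (d / 4)) := by
    intro y
    refine (hamming_count n (word y) (ρ * n) τ hτ0.le).trans (Real.exp_le_exp.2 ?_)
    rw [← hk]
    have h7 : (n : ℝ) * (k * Real.exp (-τ)) ≤ n * (d / 8) := by gcongr
    have h8 : τ * (ρ * n) = n * (d / 8) := by rw [← mul_assoc, hρτ, mul_comm]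
    linarith
  have hW : ∀ x ∈ G, word x ∈ E.biUnion ball := by
    intro x hx
    obtain ⟨y, hy, hxy⟩ := hE3 x hx
    have hyG := hE1 hy
    rw [Finset.mem_biUnion]
    refine ⟨y, hy, Finset.mem_filter.2 ⟨Finset.mem_univ _, ?_⟩⟩
    have hsub : (Finset.univ.filter fun i => word x i ≠ word y i).map Fin.valEmbedding ⊆
        (((Finset.range n).filter fun j => f^[j] x ∈ U) ∪
        ((Finset.range n).filter fun j => f^[j] y ∈ U)) ∪
        ((Finset.range n).filter fun j => ε < dist (f^[j] x) (f^[j] y)) := by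
      intro j hj
      obtain ⟨i, hi, rfl⟩ := Finset.mem_map.1 hj
      have hi' := (Finset.mem_filter.1 hi).2
      simp only [Finset.mem_union, Finset.mem_filter, Finset.mem_range, Fin.valEmbedding_apply,
        i.2, true_and]
      by_contra hc
      push Not at hc
      exact hi' (hUidx _ _ hc.1.1 hc.1.2 hc.2)
    have h9 := Finset.card_le_card hsub
    rw [Finset.card_map] at h9
    have h10 := h9.trans ((Finset.card_union_le _ _).trans
      (Nat.add_le_add_right (Finset.card_union_le _ _) _))
    rw [← sepCount_eq] at h10
    have h11 : ((Finset.univ.filter fun i => word x i ≠ word y i).card : ℝ) ≤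
        visits f U n x + visits f U n y + sepCount f ε n x y := by
      exact_mod_cast h10
    have h12 : (visits f U n x : ℝ) < ρ / 4 * n := hx.2
    have h13 : (visits f U n y : ℝ) < ρ / 4 * n := hyG.2
    have := mul_pos hρ0 hn'
    linarith
  have hent := entropy_le f hf.measurable (ν : Measure X) s hs idx hidx n G hGne κ hGc
    (E.biUnion ball) hW
  have hcard : ((E.biUnion ball).card : ℝ) ≤ Real.exp (n * a' + n * (d / 4)) := by
    calc ((E.biUnion ball).card : ℝ) ≤ ∑ y ∈ E, ((ball y).card : ℝ) := by
          exact_mod_cast Finset.card_biUnion_le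
      _ ≤ ∑ y ∈ E, Real.exp (n * (d / 4)) := Finset.sum_le_sum fun y _ => hball y
      _ = E.card * Real.exp (n * (d / 4)) := by simp
      _ ≤ Real.exp (n * a') * Real.exp (n * (d / 4)) := by gcongr
      _ = _ := by rw [← Real.exp_add]
  have hpos : (0 : ℝ) < (E.biUnion ball).card := by
    obtain ⟨x, hx⟩ := hGne
    exact_mod_cast Finset.card_pos.2 ⟨_, hW x hx⟩
  have hlogc : Real.log (E.biUnion ball).card ≤ n * a' + n * (d / 4) := by
    rw [Real.log_le_iff_le_exp hpos]; exact hcard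
  rw [← hk] at hent
  have h14 : κ * (n * Real.log k) ≤ n * (d / 8) := by
    calc κ * (n * Real.log k) = n * (κ * Real.log k) := by ring
      _ ≤ _ := by gcongr
  have h15 := mul_pos hn' hd0
  have h16 : a * n = n * a' + n * d := by rw [hd]; ring
  linarith

end LowerCore
end SPaux

open MeasureTheory Filter Set
open scoped ENNReal NNReal
open Paper

set_option linter.unusedSectionVars false

namespace SPaux

section Final
variable {X : Type*} [MetricSpace X] [MeasurableSpace X] [BorelSpace X]

lemma scaled_exp {n : ℕ} (hn : 0 < n) (c : ℝ) :
    (((n : ℝ)⁻¹ : ℝ) : EReal) * (ENNReal.ofReal (Real.exp (n * c))).log = (c : EReal) := by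
  have hn' : (n : ℝ) ≠ 0 := by exact_mod_cast hn.ne'
  rw [ENNReal.log_ofReal, if_neg (not_le.2 (Real.exp_pos _)), Real.log_exp, ← EReal.coe_mul]
  congr 1
  field_simp

lemma scaled_mono (n : ℕ) {P Q : ℝ≥0∞} (h : P ≤ Q) :
    (((n : ℝ)⁻¹ : ℝ) : EReal) * P.log ≤ (((n : ℝ)⁻¹ : ℝ) : EReal) * Q.log :=
  mul_le_mul_of_nonneg_left (ENNReal.log_monotone h)
    (EReal.coe_nonneg.2 (inv_nonneg.2 (Nat.cast_nonneg n)))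

lemma tendsto_int [CompactSpace X] (φ : X → ℝ) (hφ : Continuous φ) (ν : ProbabilityMeasure X) :
    Tendsto (fun ρ : ProbabilityMeasure X => ∫ x, φ x ∂(ρ : Measure X)) (nhds ν)
      (nhds (∫ x, φ x ∂(ν : Measure X))) :=
  (ProbabilityMeasure.tendsto_iff_forall_integral_tendsto.1 (tendsto_id (x := nhds ν)))
    (BoundedContinuousFunction.mkOfCompact ⟨φ, hφ⟩)

lemma birk_emp (f : X → X) (φ : X → ℝ) (x : X) {n : ℕ} (hn : 0 < n) :
    birk f φ n x = n * ∫ y, φ y ∂(emp f x hn : Measure X) := by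
  have hn' : (n : ℝ) ≠ 0 := by exact_mod_cast hn.ne'
  rw [coe_emp, integral_empiric]
  field_simp

lemma SPbar_le [CompactSpace X] (f : X → X) (hf : Continuous f) (φ : X → ℝ) (hφ : Continuous φ)
    (ν : ProbabilityMeasure X) (herg : Ergodic f (ν : Measure X)) :
    SPbar f φ ν ≤ ksEntropy f (ν : Measure X) + ((∫ x, φ x ∂(ν : Measure X) : ℝ) : EReal) := by
  set I := ∫ x, φ x ∂(ν : Measure X) with hI
  refine iSup₂_le fun ε hε => ?_
  rw [← EReal.le_of_forall_lt_iff_le]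
  intro c hc
  have h1 : ksEntropy f (ν : Measure X) < ((c - I : ℝ) : EReal) := by
    rw [EReal.coe_sub]
    exact (EReal.lt_sub_iff_add_lt (Or.inl (EReal.coe_ne_bot _)) (Or.inl (EReal.coe_ne_top _))).2 hc
  obtain ⟨s, hs, hfr, hd⟩ := exists_partition (ν : Measure X) ε hε
  have h2 : Filter.atTop.liminf (fun n : ℕ => ((dynH f ν s n / n : ℝ) : EReal)) <
      ((c - I : ℝ) : EReal) := by
    refine lt_of_le_of_lt ?_ h1
    exact le_iSup₂_of_le (f := fun (s : Finset (Set X)) (_ : IsFinPartition s) =>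
      Filter.atTop.liminf (fun n : ℕ => ((dynH f ν s n / n : ℝ) : EReal))) s hs le_rfl
  obtain ⟨q, hq, hq0⟩ := ((frequently_lt_of_liminf_lt (by isBoundedDefault) h2).and_eventually
    (eventually_gt_atTop 0)).exists
  have hq' : dynH f ν s q / q < c - I := EReal.coe_lt_coe_iff.1 hq
  obtain ⟨a, ha1, ha2⟩ := exists_between hq'
  obtain ⟨F1, hF1, C, hC, hcount⟩ := upper_core f hf ν herg.toMeasurePreserving s hs hfr ε hd q hq0
    a ha1
  set γ := (c - I - a) / 2 with hγ
  have hγ0 : 0 < γ := by rw [hγ]; linarith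
  have hF2 : {ρ : ProbabilityMeasure X | ∫ x, φ x ∂(ρ : Measure X) < I + γ} ∈ nhds ν :=
    (tendsto_int φ hφ ν).eventually (gt_mem_nhds (show I < I + γ by linarith))
  refine iInf₂_le_of_le (F1 ∩ {ρ : ProbabilityMeasure X | ∫ x, φ x ∂(ρ : Measure X) < I + γ})
    (inter_mem hF1 hF2) ?_
  have hlarge : ∀ᶠ n : ℕ in atTop, C ≤ Real.exp (n * γ) := by
    have : Tendsto (fun n : ℕ => Real.exp ((n : ℝ) * γ)) atTop atTop :=
      Real.tendsto_exp_atTop.comp (tendsto_natCast_atTop_atTop.atTop_mul_const hγ0)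
    exact this.eventually_ge_atTop C
  refine limsup_le_of_le (by isBoundedDefault) ?_
  filter_upwards [hlarge, eventually_gt_atTop 0] with n hn hn0
  rw [← scaled_exp hn0 c]
  refine scaled_mono n (iSup₂_le ?_)
  rintro E ⟨hE, hsep⟩
  have hb : ∀ x ∈ E, Real.exp (birk f φ n x) ≤ Real.exp (n * (I + γ)) := by
    intro x hx
    have := ((mem_Xnf f x hn0 _).1 (hE hx)).2
    rw [birk_emp f φ x hn0]
    have h3 : ∫ y, φ y ∂(emp f x hn0 : Measure X) < I + γ := this
    gcongr
  have hE1 : (↑E : Set X) ⊆ Xnf f n F1 := fun x hx =>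
    (mem_Xnf f x hn0 _).2 ((mem_Xnf f x hn0 _).1 (hE hx)).1
  have hc1 := hcount n hn0 E hE1 hsep
  rw [← ENNReal.ofReal_sum_of_nonneg (fun x _ => (Real.exp_pos _).le)]
  apply ENNReal.ofReal_le_ofReal
  calc ∑ x ∈ E, Real.exp (birk f φ n x) ≤ ∑ x ∈ E, Real.exp (n * (I + γ)) := Finset.sum_le_sum hb
    _ = E.card * Real.exp (n * (I + γ)) := by rw [Finset.sum_const, nsmul_eq_mul]
    _ ≤ (C * Real.exp (n * a)) * Real.exp (n * (I + γ)) := by gcongr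
    _ ≤ (Real.exp (n * γ) * Real.exp (n * a)) * Real.exp (n * (I + γ)) := by gcongr
    _ = Real.exp (n * c) := by
      rw [← Real.exp_add, ← Real.exp_add]
      congr 1
      rw [hγ]; ring

lemma le_SPlow' [CompactSpace X] (f : X → X) (hf : Continuous f) (φ : X → ℝ) (hφ : Continuous φ)
    (ν : ProbabilityMeasure X) (herg : Ergodic f (ν : Measure X)) :
    ksEntropy f (ν : Measure X) + ((∫ x, φ x ∂(ν : Measure X) : ℝ) : EReal) ≤ SPlow' f φ ν := by
  set I := ∫ x, φ x ∂(ν : Measure X) with hI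
  rw [← EReal.ge_of_forall_gt_iff_ge]
  intro c hc
  have h1 : ((c - I : ℝ) : EReal) < ksEntropy f (ν : Measure X) := by
    rw [EReal.coe_sub]
    exact EReal.sub_lt_of_lt_add hc
  rw [ksEntropy] at h1
  obtain ⟨s, h1⟩ := lt_iSup_iff.1 h1
  obtain ⟨hs, h1⟩ := lt_iSup_iff.1 h1
  obtain ⟨a, ha1, ha2⟩ := EReal.lt_iff_exists_real_btwn.1 h1
  have ha1' : c - I < a := EReal.coe_lt_coe_iff.1 ha1
  have ha : ∀ᶠ n : ℕ in atTop, a < dynH f ν s n / n := by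
    filter_upwards [eventually_lt_of_lt_liminf ha2 (by isBoundedDefault)] with n hn
    exact EReal.coe_lt_coe_iff.1 hn
  obtain ⟨a', hca', haa⟩ := exists_between ha1'
  obtain ⟨ε, hε, δ, hδ, hlow⟩ := lower_core f hf ν herg s hs a a' haa ha
  set γ := a' - (c - I) with hγ
  have hγ0 : 0 < γ := by rw [hγ]; linarith
  refine le_iSup₂_of_le ε hε (le_iSup₂_of_le δ hδ (le_iInf₂ fun F hF => ?_))
  have hF2 : {ρ : ProbabilityMeasure X | I - γ < ∫ x, φ x ∂(ρ : Measure X)} ∈ nhds ν :=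
    (tendsto_int φ hφ ν).eventually (lt_mem_nhds (show I - γ < I by linarith))
  refine le_liminf_of_le (by isBoundedDefault) ?_
  filter_upwards [hlow _ (inter_mem hF hF2), eventually_gt_atTop 0] with n hn hn0
  obtain ⟨E, hE, hsep, hcard⟩ := hn
  rw [← scaled_exp hn0 c]
  refine scaled_mono n ?_
  have hE1 : (↑E : Set X) ⊆ Xnf f n F := fun x hx =>
    (mem_Xnf f x hn0 _).2 ((mem_Xnf f x hn0 _).1 (hE hx)).1
  refine le_iSup₂_of_le (f := fun (E : Finset X) (_ : ↑E ⊆ Xnf f n F ∧ IsDeltaSep f δ n ε ↑E) =>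
    ∑ x ∈ E, ENNReal.ofReal (Real.exp (birk f φ n x))) E ⟨hE1, hsep⟩ ?_
  have hb : ∀ x ∈ E, Real.exp (n * (I - γ)) ≤ Real.exp (birk f φ n x) := by
    intro x hx
    have := ((mem_Xnf f x hn0 _).1 (hE hx)).2
    rw [birk_emp f φ x hn0]
    have h3 : I - γ < ∫ y, φ y ∂(emp f x hn0 : Measure X) := this
    gcongr
  rw [← ENNReal.ofReal_sum_of_nonneg (fun x _ => (Real.exp_pos _).le)]
  apply ENNReal.ofReal_le_ofReal
  calc Real.exp (n * c) = Real.exp (n * a') * Real.exp (n * (I - γ)) := by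
        rw [← Real.exp_add]
        congr 1
        rw [hγ]; ring
    _ ≤ E.card * Real.exp (n * (I - γ)) := by gcongr
    _ = ∑ x ∈ E, Real.exp (n * (I - γ)) := by rw [Finset.sum_const, nsmul_eq_mul]
    _ ≤ ∑ x ∈ E, Real.exp (birk f φ n x) := Finset.sum_le_sum hb

lemma PsepDelta_le (f : X → X) (φ : X → ℝ) (F : Set (ProbabilityMeasure X)) (δ : ℝ) (hδ : 0 < δ)
    (n : ℕ) (hn : 0 < n) (ε : ℝ) : PsepDelta f φ F δ n ε ≤ Psep f φ F n ε := by
  refine iSup₂_le ?_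
  rintro E ⟨hE, hsep⟩
  refine le_iSup₂_of_le (f := fun (E : Finset X) (_ : ↑E ⊆ Xnf f n F ∧ IsNSep f n ε ↑E) =>
    ∑ x ∈ E, ENNReal.ofReal (Real.exp (birk f φ n x))) E ⟨hE, ?_⟩ le_rfl
  intro x hx y hy hxy
  have h := hsep x hx y hy hxy
  have hn' : (0 : ℝ) < n := by exact_mod_cast hn
  have h2 : (0 : ℝ) < sepCount f ε n x y := lt_of_lt_of_le (mul_pos hδ hn') h
  have h3 : 0 < sepCount f ε n x y := by exact_mod_cast h2
  rw [sepCount_eq] at h3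
  obtain ⟨j, hj⟩ := Finset.card_pos.1 h3
  rw [Finset.mem_filter, Finset.mem_range] at hj
  exact ⟨j, hj⟩

lemma SPlow'_le_SPlow (f : X → X) (φ : X → ℝ) (ν : ProbabilityMeasure X) :
    SPlow' f φ ν ≤ SPlow f φ ν := by
  refine iSup₂_mono fun ε hε => iSup₂_le fun δ hδ => iInf₂_mono fun F hF => ?_
  refine liminf_le_liminf ?_ (by isBoundedDefault) (by isBoundedDefault)
  filter_upwards [eventually_gt_atTop 0] with n hn
  exact scaled_mono n (PsepDelta_le f φ F δ hδ n hn ε)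

lemma SPbar'_le_SPbar (f : X → X) (φ : X → ℝ) (ν : ProbabilityMeasure X) :
    SPbar' f φ ν ≤ SPbar f φ ν := by
  refine iSup₂_mono fun ε hε => iSup₂_le fun δ hδ => iInf₂_mono fun F hF => ?_
  refine limsup_le_limsup ?_ (by isBoundedDefault) (by isBoundedDefault)
  filter_upwards [eventually_gt_atTop 0] with n hn
  exact scaled_mono n (PsepDelta_le f φ F δ hδ n hn ε)

lemma SPlow_le_SPbar (f : X → X) (φ : X → ℝ) (ν : ProbabilityMeasure X) :
    SPlow f φ ν ≤ SPbar f φ ν :=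
  iSup₂_mono fun _ _ => iInf₂_mono fun _ _ => liminf_le_limsup

lemma SPlow'_le_SPbar' (f : X → X) (φ : X → ℝ) (ν : ProbabilityMeasure X) :
    SPlow' f φ ν ≤ SPbar' f φ ν :=
  iSup₂_mono fun _ _ => iSup₂_mono fun _ _ => iInf₂_mono fun _ _ => liminf_le_limsup

lemma main_eq [CompactSpace X] (f : X → X) (hf : Continuous f) (φ : X → ℝ) (hφ : Continuous φ)
    (ν : ProbabilityMeasure X) (herg : Ergodic f (ν : Measure X)) :
    SPbar f φ ν = ksEntropy f (ν : Measure X) + ((∫ x, φ x ∂(ν : Measure X) : ℝ) : EReal) ∧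
    SPlow f φ ν = ksEntropy f (ν : Measure X) + ((∫ x, φ x ∂(ν : Measure X) : ℝ) : EReal) ∧
    SPbar' f φ ν = ksEntropy f (ν : Measure X) + ((∫ x, φ x ∂(ν : Measure X) : ℝ) : EReal) ∧
    SPlow' f φ ν = ksEntropy f (ν : Measure X) + ((∫ x, φ x ∂(ν : Measure X) : ℝ) : EReal) := by
  have h1 := SPbar_le f hf φ hφ ν herg
  have h2 := le_SPlow' f hf φ hφ ν herg
  have h3 := SPlow'_le_SPlow f φ ν
  have h4 := SPbar'_le_SPbar f φ ν
  have h5 := SPlow_le_SPbar f φ ν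
  have h6 := SPlow'_le_SPbar' f φ ν
  exact ⟨h1.antisymm (h2.trans (h3.trans h5)), (h5.trans h1).antisymm (h2.trans h3),
    (h4.trans h1).antisymm (h2.trans h6), (h6.trans (h4.trans h1)).antisymm h2⟩

end Final

end SPaux

/-- Theorem 4.9: for any ergodic measure `μ`, the measure theoretic pressures defined
via `(n,ε)`-separated and `(δ,n,ε)`-separated sets all exist (upper and lower versions
coincide) and equal the free energy `h_μ(f) + ∫φ dμ`. -/
theorem SP_eq_free_energy_of_ergodic {X : Type*} [MetricSpace X] [CompactSpace X] [MeasurableSpace X] [BorelSpace X]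
    (f : X → X) (hf : Continuous f) (φ : X → ℝ) (hφ : Continuous φ)
    (μ : Measure X) (hp : IsProbabilityMeasure μ) (herg : Ergodic f μ) :
    SPbar f φ (⟨μ, hp⟩ : MeasureTheory.ProbabilityMeasure X) =
        ksEntropy f μ + ((∫ x, φ x ∂μ : ℝ) : EReal) ∧
    SPlow f φ (⟨μ, hp⟩ : MeasureTheory.ProbabilityMeasure X) =
        ksEntropy f μ + ((∫ x, φ x ∂μ : ℝ) : EReal) ∧
    SPbar' f φ (⟨μ, hp⟩ : MeasureTheory.ProbabilityMeasure X) =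
        ksEntropy f μ + ((∫ x, φ x ∂μ : ℝ) : EReal) ∧
    SPlow' f φ (⟨μ, hp⟩ : MeasureTheory.ProbabilityMeasure X) =
        ksEntropy f μ + ((∫ x, φ x ∂μ : ℝ) : EReal) := by
  exact SPaux.main_eq f hf φ hφ ⟨μ, hp⟩ herg
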